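/- Let X ∈ ℂ^{T×M} satisfy the RIP of order s with constant δ_s ∈ [0,1) and of order s+1 with constant δ_{s+1} ∈ [0,1). Let Ω ⊆ {1,…,M} with |Ω| ≤ s, let J ⊆ Ω, and let j ∈ {1,…,M} \ Ω. Let P_J = X_J ((X_J)^H X_J)^{−1} (X_J)^H (well defined since (X_J)^H X_J is invertible). Then the spectral norm of the 1×|Ω\J| matrix X(j)^H (I − P_J) X_{Ω\J} satisfies ‖X(j)^H (I − P_J) X_{Ω\J}‖ ≤ δ_{s+1}/(1 − δ_s). -/

import Mathlib

open Matrix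

/-- `X` satisfies the restricted isometry property (RIP) of order `k` with
constant `δ ∈ [0,1)`: for every `k`-sparse vector `h`,
`(1−δ)‖h‖² ≤ ‖Xh‖² ≤ (1+δ)‖h‖²` (Euclidean norms). -/
def RIP {T M : ℕ} (X : Matrix (Fin T) (Fin M) ℂ) (k : ℕ) (δ : ℝ) : Prop :=
  0 ≤ δ ∧ δ < 1 ∧
    ∀ h : Fin M → ℂ, (Finset.univ.filter fun i => h i ≠ 0).card ≤ k →
      (1 - δ) * ∑ i, ‖h i‖ ^ 2 ≤ ∑ j, ‖X.mulVec h j‖ ^ 2 ∧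
        ∑ j, ‖X.mulVec h j‖ ^ 2 ≤ (1 + δ) * ∑ i, ‖h i‖ ^ 2

/-- Spectral norm (largest singular value) of a complex matrix, realized as the
operator norm of the induced linear map between Euclidean spaces. -/
noncomputable def specNorm {m n : Type*} [Fintype m] [Fintype n] [DecidableEq n]
    (A : Matrix m n ℂ) : ℝ :=
  ‖LinearMap.toContinuousLinearMap (Matrix.toEuclideanLin A)‖

/-- Submatrix of `X` formed by the columns indexed by the set `J`. -/
def cols {T M : ℕ} (X : Matrix (Fin T) (Fin M) ℂ) (J : Finset (Fin M)) :
    Matrix (Fin T) J ℂ :=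
  X.submatrix id (fun j => (j : Fin M))


/-- The `j`-th column of `X`, viewed as a `T × 1` matrix. -/
def col1 {T M : ℕ} (X : Matrix (Fin T) (Fin M) ℂ) (j : Fin M) :
    Matrix (Fin T) (Fin 1) ℂ :=
  fun t _ => X t j

/-- The orthogonal projection `P_J = X_J ((X_J)ᴴ X_J)⁻¹ (X_J)ᴴ` onto the column
span of `X_J`. -/
noncomputable def projMat {T M : ℕ} (X : Matrix (Fin T) (Fin M) ℂ)
    (J : Finset (Fin M)) : Matrix (Fin T) (Fin T) ℂ :=
  cols X J * ((cols X J)ᴴ * cols X J)⁻¹ * (cols X J)ᴴ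

/-!
For `v` supported on `Ω \ J`, the residual `(I − P_J) X v` is `X (v − w)` with `w` supported on `J`
and `X w ⟂ X (v − w)`. By polarization, the RIP makes `⟪X a, X b⟫` differ from `⟪a, b⟫` by at most
`δ ‖a‖ ‖b‖`. Taking `a = w`, `b = v − w` and using `v ⟂ w`, this gives `‖w‖ ≤ δ_s ‖v − w‖`, hence
`(1 − δ_s) ‖v − w‖ ≤ ‖v‖`. Taking `a = e_j`, `b = v − w`, which are orthogonal because `j ∉ Ω`, it
gives `|⟪X e_j, X (v − w)⟫| ≤ δ_{s+1} ‖v − w‖`.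
-/

open WithLp

section NearIsometry

variable {𝕜 E F : Type*} [RCLike 𝕜] [NormedAddCommGroup E] [InnerProductSpace 𝕜 E]
  [NormedAddCommGroup F] [InnerProductSpace 𝕜 F]

/-- The linear map `A` is a near-isometry on the subspace `V` with constant `δ`: it preserves the
squared norms of vectors of `V` up to a relative error `δ`. The RIP of order `k` says that this
holds on every coordinate subspace of dimension at most `k`. -/
def IsNearIsometryOn (δ : ℝ) (A : E →ₗ[𝕜] F) (V : Submodule 𝕜 E) : Prop :=
  ∀ x ∈ V, |‖A x‖ ^ 2 - ‖x‖ ^ 2| ≤ δ * ‖x‖ ^ 2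

namespace IsNearIsometryOn

variable {δ : ℝ} {A : E →ₗ[𝕜] F} {V : Submodule 𝕜 E} {x y : E}

theorem eq_zero_of_map_eq_zero (hA : IsNearIsometryOn δ A V) (hδ : δ < 1) (hx : x ∈ V)
    (hAx : A x = 0) : x = 0 := by
  have hsq : ‖x‖ ^ 2 ≤ δ * ‖x‖ ^ 2 := by simpa [hAx] using hA x hx
  have : ‖x‖ ^ 2 ≤ 0 := by nlinarith [sq_nonneg ‖x‖]
  simpa using this

theorem re_inner_map_sub_inner_le_half_add (hA : IsNearIsometryOn δ A V) (hx : x ∈ V)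
    (hy : y ∈ V) :
    RCLike.re (inner 𝕜 (A x) (A y) - inner 𝕜 x y) ≤ δ * (‖x‖ ^ 2 + ‖y‖ ^ 2) / 2 := by
  have hadd := (abs_le.mp (hA (x + y) (V.add_mem hx hy))).2
  have hsub := (abs_le.mp (hA (x - y) (V.sub_mem hx hy))).1
  rw [map_add, norm_add_sq (𝕜 := 𝕜), norm_add_sq (𝕜 := 𝕜)] at hadd
  rw [map_sub, norm_sub_sq (𝕜 := 𝕜), norm_sub_sq (𝕜 := 𝕜)] at hsub
  rw [map_sub]
  linarith

theorem re_inner_map_sub_inner_le (hA : IsNearIsometryOn δ A V) (hx : x ∈ V) (hy : y ∈ V) :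
    RCLike.re (inner 𝕜 (A x) (A y) - inner 𝕜 x y) ≤ δ * ‖x‖ * ‖y‖ := by
  rcases eq_or_ne x 0 with rfl | hx0
  · simp
  rcases eq_or_ne y 0 with rfl | hy0
  · simp
  -- Rescaling `x` and `y` to the same norm turns the arithmetic mean into the geometric one.
  have hscaled := hA.re_inner_map_sub_inner_le_half_add
    (V.smul_mem (‖y‖ : 𝕜) hx) (V.smul_mem (‖x‖ : 𝕜) hy)
  simp only [map_smul, inner_smul_left, inner_smul_right, RCLike.conj_ofReal, ← mul_sub,
    RCLike.re_ofReal_mul, norm_smul, RCLike.norm_ofReal, abs_norm] at hscaled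
  have hpos : 0 < ‖x‖ * ‖y‖ := by positivity
  refine le_of_mul_le_mul_left ?_ hpos
  linarith

theorem norm_inner_map_sub_inner_le (hA : IsNearIsometryOn δ A V) (hx : x ∈ V) (hy : y ∈ V) :
    ‖inner 𝕜 (A x) (A y) - inner 𝕜 x y‖ ≤ δ * ‖x‖ * ‖y‖ := by
  obtain ⟨c, hc, hphase⟩ := RCLike.exists_norm_eq_mul_self (inner 𝕜 (A x) (A y) - inner 𝕜 x y)
  have hrot := hA.re_inner_map_sub_inner_le hx (V.smul_mem c hy)
  rwa [map_smul, inner_smul_right, inner_smul_right, ← mul_sub, ← hphase, RCLike.ofReal_re,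
    norm_smul, hc, one_mul] at hrot

theorem norm_inner_map_le_of_inner_eq_zero (hA : IsNearIsometryOn δ A V) (hx : x ∈ V) (hy : y ∈ V)
    (hxy : inner 𝕜 x y = 0) : ‖inner 𝕜 (A x) (A y)‖ ≤ δ * ‖x‖ * ‖y‖ := by
  simpa [hxy] using hA.norm_inner_map_sub_inner_le hx hy

theorem one_sub_mul_norm_sub_le (hA : IsNearIsometryOn δ A V) (hδ : 0 ≤ δ) {v w : E} (hv : v ∈ V)
    (hw : w ∈ V) (hwv : inner 𝕜 w v = 0) (hres : inner 𝕜 (A w) (A (v - w)) = 0) :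
    (1 - δ) * ‖v - w‖ ≤ ‖v‖ := by
  have hw_sq : ‖w‖ * ‖w‖ ≤ ‖w‖ * (δ * ‖v - w‖) := by
    have := hA.norm_inner_map_sub_inner_le hw (V.sub_mem hv hw)
    rw [hres, zero_sub, norm_neg, inner_sub_right, hwv, zero_sub, norm_neg,
      inner_self_eq_norm_sq_to_K, norm_pow, RCLike.norm_ofReal, abs_norm] at this
    linarith
  have hw_le : ‖w‖ ≤ δ * ‖v - w‖ := by
    rcases eq_or_ne w 0 with rfl | hw0
    · rw [norm_zero]
      positivity
    · exact le_of_mul_le_mul_left hw_sq (norm_pos_iff.mpr hw0)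
  linarith [norm_sub_le v w]

end IsNearIsometryOn

end NearIsometry

section CoordinateSubspace

variable {𝕜 ι κ m : Type*} [RCLike 𝕜]

variable (𝕜) in
/-- The coordinate subspace of vectors supported on `s`: Mathlib's `Pi.spanSubset`, transported to
Euclidean space. -/
noncomputable def coordSubspace [Finite ι] (s : Set ι) : Submodule 𝕜 (EuclideanSpace 𝕜 ι) :=
  (Pi.spanSubset 𝕜 s).comap (WithLp.linearEquiv 2 𝕜 (ι → 𝕜)).toLinearMap

theorem mem_coordSubspace [Finite ι] {s : Set ι} {x : EuclideanSpace 𝕜 ι} :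
    x ∈ coordSubspace 𝕜 s ↔ ∀ i ∉ s, x i = 0 :=
  Pi.mem_spanSubset_iff

theorem coordSubspace_mono [Finite ι] {s t : Set ι} (hst : s ⊆ t) :
    coordSubspace 𝕜 s ≤ coordSubspace 𝕜 t :=
  fun _ hx => mem_coordSubspace.mpr fun i hi => mem_coordSubspace.mp hx i fun h => hi (hst h)

theorem single_mem_coordSubspace [Finite ι] [DecidableEq ι] {s : Set ι} {i : ι} (hi : i ∈ s)
    (c : 𝕜) : EuclideanSpace.single i c ∈ coordSubspace 𝕜 s :=
  mem_coordSubspace.mpr fun j hj => by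
    rw [PiLp.single_apply, if_neg (ne_of_mem_of_not_mem hi hj).symm]

variable [Fintype ι] [Fintype κ]

theorem inner_eq_zero_of_mem_coordSubspace {s t : Set ι} (hst : Disjoint s t)
    {x y : EuclideanSpace 𝕜 ι} (hx : x ∈ coordSubspace 𝕜 s) (hy : y ∈ coordSubspace 𝕜 t) :
    inner 𝕜 x y = 0 := by
  refine Finset.sum_eq_zero fun i _ => ?_
  by_cases hi : i ∈ s
  · rw [mem_coordSubspace.mp hy i (hst.notMem_of_mem_left hi), inner_zero_right]
  · rw [mem_coordSubspace.mp hx i hi, inner_zero_left]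

/-- Extension by zero along an injection of index types, as an isometry of Euclidean spaces. It
turns coefficient vectors of a column submatrix into sparse ones of the whole matrix. -/
noncomputable def extendZero (e : κ ↪ ι) : EuclideanSpace 𝕜 κ →ₗᵢ[𝕜] EuclideanSpace 𝕜 ι where
  toLinearMap := (WithLp.linearEquiv 2 𝕜 (ι → 𝕜)).symm.toLinearMap ∘ₗ
    Function.ExtendByZero.linearMap 𝕜 e ∘ₗ (WithLp.linearEquiv 2 𝕜 (κ → 𝕜)).toLinearMap
  norm_map' v := by
    rw [EuclideanSpace.norm_eq, EuclideanSpace.norm_eq]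
    congr 1
    refine (Fintype.sum_of_injective e e.injective _ _ (fun i hi => ?_) fun k => ?_).symm
    · simp [Function.extend_apply' _ _ _ hi]
    · simp [e.injective.extend_apply]

theorem extendZero_apply (e : κ ↪ ι) (v : EuclideanSpace 𝕜 κ) (k : κ) :
    extendZero e v (e k) = v k :=
  e.injective.extend_apply _ _ k

theorem extendZero_mem_coordSubspace (e : κ ↪ ι) (v : EuclideanSpace 𝕜 κ) :
    extendZero e v ∈ coordSubspace 𝕜 (Set.range e) :=
  mem_coordSubspace.mpr fun _ hi => Function.extend_apply' _ _ _ hi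

theorem extendZero_subtype_mem_coordSubspace {J S : Finset ι} (hJS : J ⊆ S)
    (v : EuclideanSpace 𝕜 J) :
    extendZero (.subtype (· ∈ J)) v ∈ coordSubspace 𝕜 (S : Set ι) :=
  coordSubspace_mono (by simpa using hJS) (extendZero_mem_coordSubspace _ v)

theorem toEuclideanLin_submatrix_id [DecidableEq ι] [DecidableEq κ] (A : Matrix m ι 𝕜) (e : κ ↪ ι)
    (v : EuclideanSpace 𝕜 κ) :
    toEuclideanLin (A.submatrix id e) v = toEuclideanLin A (extendZero e v) := by
  ext t
  change ∑ k, A t (e k) * v k = ∑ i, A t i * extendZero e v i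
  refine Fintype.sum_of_injective e e.injective _ _ (fun i hi => ?_) fun k => ?_
  · rw [mem_coordSubspace.mp (extendZero_mem_coordSubspace e v) i hi, mul_zero]
  · rw [extendZero_apply]

end CoordinateSubspace

section ColumnProjection

variable {𝕜 m n : Type*} [RCLike 𝕜] [Fintype m] [DecidableEq m] [Fintype n] [DecidableEq n]

theorem conjTranspose_mul_one_sub_gram_proj {R : Type*} [CommRing R] [StarRing R]
    {A : Matrix m n R} (hA : IsUnit (Aᴴ * A)) :
    Aᴴ * (1 - A * (Aᴴ * A)⁻¹ * Aᴴ) = 0 := by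
  rw [Matrix.mul_sub, Matrix.mul_one, ← Matrix.mul_assoc, ← Matrix.mul_assoc,
    mul_nonsing_inv _ ((isUnit_iff_isUnit_det _).mp hA), Matrix.one_mul, sub_self]

theorem inner_toEuclideanLin_left (A : Matrix m n 𝕜) (x : EuclideanSpace 𝕜 n)
    (y : EuclideanSpace 𝕜 m) :
    inner 𝕜 (toEuclideanLin A x) y = inner 𝕜 x (toEuclideanLin Aᴴ y) := by
  rw [toEuclideanLin_conjTranspose_eq_adjoint, LinearMap.adjoint_inner_right]

theorem inner_toEuclideanLin_one_sub_gram_proj {A : Matrix m n 𝕜} (hA : IsUnit (Aᴴ * A))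
    (z : EuclideanSpace 𝕜 n) (b : EuclideanSpace 𝕜 m) :
    inner 𝕜 (toEuclideanLin A z) (toEuclideanLin (1 - A * (Aᴴ * A)⁻¹ * Aᴴ) b) = 0 := by
  rw [inner_toEuclideanLin_left, ← LinearMap.comp_apply, ← toLpLin_mul_same,
    conjTranspose_mul_one_sub_gram_proj hA, map_zero, LinearMap.zero_apply, inner_zero_right]

end ColumnProjection

section RestrictedIsometry

variable {T M k : ℕ} {δ : ℝ} {X : Matrix (Fin T) (Fin M) ℂ}

theorem toEuclideanLin_cols (X : Matrix (Fin T) (Fin M) ℂ) (K : Finset (Fin M))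
    (v : EuclideanSpace ℂ K) :
    toEuclideanLin (cols X K) v = toEuclideanLin X (extendZero (.subtype (· ∈ K)) v) :=
  toEuclideanLin_submatrix_id X (.subtype (· ∈ K)) v

theorem toEuclideanLin_col1_single (X : Matrix (Fin T) (Fin M) ℂ) (j : Fin M) :
    toEuclideanLin (col1 X j) (EuclideanSpace.single 0 1) =
      toEuclideanLin X (EuclideanSpace.single j 1) := by
  ext t
  simp [toLpLin_apply, col1]

theorem norm_toEuclideanLin_conjTranspose_col1 (X : Matrix (Fin T) (Fin M) ℂ) (j : Fin M)
    (b : EuclideanSpace ℂ (Fin T)) :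
    ‖toEuclideanLin (col1 X j)ᴴ b‖ =
      ‖inner ℂ (toEuclideanLin X (EuclideanSpace.single j 1)) b‖ := by
  rw [← toEuclideanLin_col1_single, inner_toEuclideanLin_left, EuclideanSpace.inner_single_left,
    EuclideanSpace.norm_eq]
  simp

theorem exists_one_sub_projMat_eq (X : Matrix (Fin T) (Fin M) ℂ) (J : Finset (Fin M))
    (b : EuclideanSpace ℂ (Fin T)) :
    ∃ z, toEuclideanLin (1 - projMat X J) b = b - toEuclideanLin (cols X J) z := by
  refine ⟨toEuclideanLin (((cols X J)ᴴ * cols X J)⁻¹ * (cols X J)ᴴ) b, ?_⟩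
  rw [projMat, Matrix.mul_assoc, map_sub, toLpLin_one, toLpLin_mul_same, LinearMap.sub_apply,
    LinearMap.id_apply, LinearMap.comp_apply]

namespace RIP

theorem isNearIsometryOn (hX : RIP X k δ) {S : Finset (Fin M)} (hS : S.card ≤ k) :
    IsNearIsometryOn δ (toEuclideanLin X) (coordSubspace ℂ (S : Set (Fin M))) := by
  intro x hx
  have hsupp : (Finset.univ.filter fun i => x i ≠ 0) ⊆ S := fun i hi => by
    by_contra hiS
    exact (Finset.mem_filter.mp hi).2 (mem_coordSubspace.mp hx i hiS)
  obtain ⟨hlower, hupper⟩ := hX.2.2 x ((Finset.card_le_card hsupp).trans hS)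
  rw [EuclideanSpace.norm_sq_eq, EuclideanSpace.norm_sq_eq, abs_le]
  simp only [ofLp_toLpLin, toLin'_apply]
  constructor <;> linarith

theorem isUnit_gram (hX : RIP X k δ) {J : Finset (Fin M)} (hJ : J.card ≤ k) :
    IsUnit ((cols X J)ᴴ * cols X J) := by
  have hker : ∀ z, (cols X J).mulVecLin z = 0 → z = 0 := fun z hz => by
    have hXz : toEuclideanLin X (extendZero (.subtype (· ∈ J)) (toLp 2 z)) = 0 := by
      rw [← toEuclideanLin_cols, toLpLin_toLp]
      exact congrArg (toLp 2) hz
    have hz0 := (hX.isNearIsometryOn hJ).eq_zero_of_map_eq_zero hX.2.1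
      (extendZero_subtype_mem_coordSubspace subset_rfl _) hXz
    exact (toLp_eq_zero 2).mp ((map_eq_zero_iff _ (extendZero _).injective).mp hz0)
  open ComplexOrder in
  exact (PosDef.conjTranspose_mul_self _ ((injective_iff_map_eq_zero _).mpr hker)).isUnit

theorem norm_inner_col_le (hX : RIP X (k + 1) δ) {S : Finset (Fin M)} (hS : S.card ≤ k)
    {j : Fin M} (hj : j ∉ S) {u : EuclideanSpace ℂ (Fin M)}
    (hu : u ∈ coordSubspace ℂ (S : Set (Fin M))) :
    ‖inner ℂ (toEuclideanLin X (EuclideanSpace.single j 1)) (toEuclideanLin X u)‖ ≤ δ * ‖u‖ := by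
  have hcard : (insert j S).card ≤ k + 1 := (Finset.card_insert_le j S).trans (by lia)
  have hu_insert := coordSubspace_mono (Finset.coe_subset.mpr (Finset.subset_insert j S)) hu
  have horth : inner ℂ (EuclideanSpace.single j 1) u = 0 := by
    rw [EuclideanSpace.inner_single_left, mem_coordSubspace.mp hu j hj, mul_zero]
  simpa using (hX.isNearIsometryOn hcard).norm_inner_map_le_of_inner_eq_zero
    (single_mem_coordSubspace (Finset.mem_insert_self j S) 1) hu_insert horth

theorem exists_residual_coeff (hX : RIP X k δ) {Ω J : Finset (Fin M)} (hΩ : Ω.card ≤ k)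
    (hJ : J ⊆ Ω) (v : EuclideanSpace ℂ (Ω \ J : Finset (Fin M))) :
    ∃ u ∈ coordSubspace ℂ (Ω : Set (Fin M)), (1 - δ) * ‖u‖ ≤ ‖v‖ ∧
      toEuclideanLin (1 - projMat X J) (toEuclideanLin (cols X (Ω \ J)) v) =
        toEuclideanLin X u := by
  obtain ⟨z, hz⟩ := exists_one_sub_projMat_eq X J (toEuclideanLin (cols X (Ω \ J)) v)
  set v' := extendZero (.subtype (· ∈ Ω \ J)) v
  set w := extendZero (.subtype (· ∈ J)) z
  have hv' : v' ∈ coordSubspace ℂ (Ω : Set (Fin M)) :=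
    extendZero_subtype_mem_coordSubspace Finset.sdiff_subset v
  have hw : w ∈ coordSubspace ℂ (Ω : Set (Fin M)) := extendZero_subtype_mem_coordSubspace hJ z
  have hres : toEuclideanLin (1 - projMat X J) (toEuclideanLin (cols X (Ω \ J)) v) =
      toEuclideanLin X (v' - w) := by
    rw [hz, toEuclideanLin_cols, toEuclideanLin_cols, map_sub]
  have hwv' : inner ℂ w v' = 0 := inner_eq_zero_of_mem_coordSubspace
    (Finset.disjoint_coe.mpr Finset.disjoint_sdiff)
    (extendZero_subtype_mem_coordSubspace subset_rfl z)
    (extendZero_subtype_mem_coordSubspace subset_rfl v)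
  have hw_res : inner ℂ (toEuclideanLin X w) (toEuclideanLin X (v' - w)) = 0 := by
    rw [← hres, ← toEuclideanLin_cols]
    exact inner_toEuclideanLin_one_sub_gram_proj
      (hX.isUnit_gram ((Finset.card_le_card hJ).trans hΩ)) z _
  refine ⟨v' - w, Submodule.sub_mem _ hv' hw, ?_, hres⟩
  simpa only [v', LinearIsometry.norm_map] using
    (hX.isNearIsometryOn hΩ).one_sub_mul_norm_sub_le hX.1 hv' hw hwv' hw_res

end RIP

end RestrictedIsometry

/-- Inequality (derivation_4) in Appendix B: if `X` satisfies the RIP of orders `s`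
and `s+1` with constants `δ_s, δ_{s+1} ∈ [0,1)`, `|Ω| ≤ s`, `J ⊆ Ω` and
`j ∉ Ω`, then `‖X(j)ᴴ (I − P_J) X_{Ω\J}‖ ≤ δ_{s+1}/(1 − δ_s)`, the Gram matrix
`(X_J)ᴴ X_J` being invertible so that `P_J` is well defined. -/
theorem specNorm_col_proj_le
    {T M : ℕ} (X : Matrix (Fin T) (Fin M) ℂ) (s : ℕ) (δs δs1 : ℝ)
    (hXs : RIP X s δs) (hXs1 : RIP X (s + 1) δs1)
    (Ω J : Finset (Fin M)) (hΩ : Ω.card ≤ s) (hJ : J ⊆ Ω)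
    (j : Fin M) (hj : j ∉ Ω) :
    IsUnit ((cols X J)ᴴ * cols X J) ∧
      specNorm ((col1 X j)ᴴ * ((1 : Matrix (Fin T) (Fin T) ℂ) - projMat X J) *
          cols X (Ω \ J)) ≤ δs1 / (1 - δs) := by
  have hJs : J.card ≤ s := (Finset.card_le_card hJ).trans hΩ
  have hδs : 0 < 1 - δs := sub_pos.mpr hXs.2.1
  refine ⟨hXs.isUnit_gram hJs,
    ContinuousLinearMap.opNorm_le_bound _ (div_nonneg hXs1.1 hδs.le) fun v => ?_⟩
  obtain ⟨u, hu, hu_le, hres⟩ := hXs.exists_residual_coeff hΩ hJ v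
  rw [LinearMap.coe_toContinuousLinearMap', Matrix.mul_assoc, toLpLin_mul_same, toLpLin_mul_same,
    LinearMap.comp_apply, LinearMap.comp_apply, hres, norm_toEuclideanLin_conjTranspose_col1]
  calc ‖inner ℂ (toEuclideanLin X (EuclideanSpace.single j 1)) (toEuclideanLin X u)‖
      ≤ δs1 * ‖u‖ := hXs1.norm_inner_col_le hΩ hj hu
    _ ≤ δs1 * (‖v‖ / (1 - δs)) :=
      mul_le_mul_of_nonneg_left ((le_div_iff₀' hδs).mpr hu_le) hXs1.1
    _ = δs1 / (1 - δs) * ‖v‖ := by ring
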